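/- (Temporal Link Prediction Impossibility, core) Let (X, A) be an aggregated temporal graph on node type V (X : V → (Fin T → ℝ^p), A : V → V → (Fin T → ℝ^p)), and suppose σ is a permutation of V that is an automorphism of (X, A) (X(σ i) = X(i) and A(σ i)(σ j) = A(i)(j) for all i, j). Let i, j ∈ V and let Y : V → V → Bool be any target link labeling with Y(i)(j) ≠ Y(σ i)(σ j). Then for every permutation-equivariant node representation f : (V → (Fin T → ℝ^p)) × (V → V → (Fin T → ℝ^p)) → (V → γ) and every pairwise decoder s : γ → γ → Bool, the link predictor (u, w) ↦ s(f(X,A)(u), f(X,A)(w)) makes an error on at least one of the pairs (i, j) and (σ i, σ j); hence no equivariant temporal node representation followed by a pairwise readout can correctly predict such temporal links. -/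

import Mathlib

/-- (Temporal Link Prediction Impossibility, core) If `σ` is an automorphism of the
aggregated temporal graph `(X, A)` and `Y` is a link labeling with
`Y i j ≠ Y (σ i) (σ j)`, then any link predictor built as a pairwise readout `s` of
a permutation-equivariant node representation `f` errs on `(i, j)` or `(σ i, σ j)`. -/
theorem temporal_link_prediction_impossibility {V γ : Type*} {T p : ℕ}
    (X : V → Fin T → Fin p → ℝ) (A : V → V → Fin T → Fin p → ℝ)
    (σ : Equiv.Perm V)
    (hX : ∀ i, X (σ i) = X i) (hA : ∀ i j, A (σ i) (σ j) = A i j)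
    (i j : V) (Y : V → V → Bool) (hY : Y i j ≠ Y (σ i) (σ j))
    (f : (V → Fin T → Fin p → ℝ) × (V → V → Fin T → Fin p → ℝ) → (V → γ))
    (hequiv : ∀ (τ : Equiv.Perm V) (X' : V → Fin T → Fin p → ℝ)
        (A' : V → V → Fin T → Fin p → ℝ),
      f (X' ∘ τ, fun a b => A' (τ a) (τ b)) = (f (X', A')) ∘ τ)
    (s : γ → γ → Bool) :
    s (f (X, A) i) (f (X, A) j) ≠ Y i j ∨
      s (f (X, A) (σ i)) (f (X, A) (σ j)) ≠ Y (σ i) (σ j) := by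
  have h1 : X ∘ σ = X := funext hX
  have h2 : (fun a b => A (σ a) (σ b)) = A := funext fun a => funext fun b => hA a b
  have h3 := hequiv σ X A
  rw [h1, h2] at h3
  have h4 : ∀ v, f (X, A) (σ v) = f (X, A) v := fun v => (congrFun h3 v).symm
  rw [h4 i, h4 j]
  by_contra h
  rw [not_or, not_not, not_not] at h
  exact hY (h.1.symm.trans h.2)
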